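/- For every d ≥ 2 there exists a constant c > 0 such that OT_d(n) ≥ COT_d(⌈c·n⌉) for all n; that is, every sequence of OT_d(n) points in super-general position in R^d contains a super-order-type homogeneous subsequence of length at least ⌈c·n⌉. -/

import Mathlib

open Set

/-- `h` is an (affine) hyperplane in `ℝ^d`: the solution set of a nontrivial
linear equation `∑ i, u i * x i = c`. -/
def IsHyperplane {d : ℕ} (h : Set (Fin d → ℝ)) : Prop :=
  ∃ (u : Fin d → ℝ) (c : ℝ), u ≠ 0 ∧ h = {x | ∑ i, u i * x i = c}

/-- A curve `γ` is `k`-crossing on the interval `I` if for every hyperplane `h`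
the set `{t ∈ I : γ t ∈ h}` has at most `k` elements. -/
def CurveCrossing {d : ℕ} (k : ℕ) (I : Set ℝ) (γ : ℝ → (Fin d → ℝ)) : Prop :=
  ∀ h : Set (Fin d → ℝ), IsHyperplane h → {t | t ∈ I ∧ γ t ∈ h}.encard ≤ (k : ℕ∞)

/-- The polygonal path `p 0 p 1 ⋯ p (n-1)`, as a subset of `ℝ^d`
(the union of its edges). -/
def PathSet {d n : ℕ} (p : Fin n → (Fin d → ℝ)) : Set (Fin d → ℝ) :=
  ⋃ (i : Fin n) (h : (i : ℕ) + 1 < n), segment ℝ (p i) (p ⟨(i : ℕ) + 1, h⟩)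

/-- A polygonal path is `k`-crossing if every hyperplane containing no edge of the
path intersects the path in at most `k` points. -/
def PathCrossing {d n : ℕ} (k : ℕ) (p : Fin n → (Fin d → ℝ)) : Prop :=
  ∀ h : Set (Fin d → ℝ), IsHyperplane h →
    (∀ (i : Fin n) (hi : (i : ℕ) + 1 < n), ¬ segment ℝ (p i) (p ⟨(i : ℕ) + 1, hi⟩) ⊆ h) →
    (PathSet p ∩ h).encard ≤ (k : ℕ∞)

/-- A point sequence in `ℝ^d` is in general position if every at most `d+1` of the
points are affinely independent. -/
def GeneralPosition {d n : ℕ} (p : Fin n → (Fin d → ℝ)) : Prop :=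
  ∀ s : Finset (Fin n), s.card ≤ d + 1 → AffineIndependent ℝ (fun i : s => p i)

/-- The sign (orientation) of an ordered `(d+1)`-tuple of points of `ℝ^d`: the sign of
the determinant of the `(d+1) × (d+1)` matrix whose `j`-th column is `(1, q j)`. -/
noncomputable def otSign {d : ℕ} (q : Fin (d + 1) → (Fin d → ℝ)) : ℝ :=
  Real.sign (Matrix.det (Matrix.of fun i j : Fin (d + 1) =>
    (Fin.cons (1 : ℝ) (q j) : Fin (d + 1) → ℝ) i))

/-- A point sequence is order-type homogeneous if all of its increasing-index
`(d+1)`-tuples have the same nonzero sign. -/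
def OrderTypeHomogeneous {d n : ℕ} (p : Fin n → (Fin d → ℝ)) : Prop :=
  ∃ σ : ℝ, σ ≠ 0 ∧ ∀ f : Fin (d + 1) → Fin n, StrictMono f →
    otSign (fun j => p (f j)) = σ

/-- The sign of a `(d+1)`-element subset of the index set of a point sequence:
the sign of the corresponding increasing-index `(d+1)`-tuple (junk value `0` if the
set does not have `d+1` elements). -/
noncomputable def finsetSign {d n : ℕ} (p : Fin n → (Fin d → ℝ)) (s : Finset (Fin n)) : ℝ :=
  if h : s.card = d + 1 then otSign (fun j => p ((s.orderIsoOfFin h) j : Fin n)) else 0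

/-- A point sequence in `ℝ^d` is in super-general position if for each `1 ≤ k ≤ d` its
projection to the first `k` coordinates is in general position. -/
def SuperGeneralPosition {d n : ℕ} (p : Fin n → (Fin d → ℝ)) : Prop :=
  ∀ (k : ℕ), 1 ≤ k → ∀ (hk : k ≤ d),
    GeneralPosition (fun i => fun j : Fin k => p i (Fin.castLE hk j))

/-- A point sequence in `ℝ^d` is super-order-type homogeneous if for each `1 ≤ k ≤ d` its
projection to the first `k` coordinates is order-type homogeneous. -/
def SuperOrderTypeHomogeneous {d n : ℕ} (p : Fin n → (Fin d → ℝ)) : Prop :=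
  ∀ (k : ℕ), 1 ≤ k → ∀ (hk : k ≤ d),
    OrderTypeHomogeneous (fun i => fun j : Fin k => p i (Fin.castLE hk j))

/-- `OTNum d n` is the smallest `N` such that every sequence of `N` points in general
position in `ℝ^d` contains an order-type homogeneous subsequence of length `n`. -/
noncomputable def OTNum (d n : ℕ) : ℕ :=
  sInf {N : ℕ | ∀ p : Fin N → (Fin d → ℝ), GeneralPosition p →
    ∃ f : Fin n → Fin N, StrictMono f ∧ OrderTypeHomogeneous (fun i => p (f i))}

/-- `COTNum d n` is the smallest `N` such that every sequence of `N` points in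
super-general position in `ℝ^d` contains a super-order-type homogeneous subsequence
of length `n`. -/
noncomputable def COTNum (d n : ℕ) : ℕ :=
  sInf {N : ℕ | ∀ p : Fin N → (Fin d → ℝ), SuperGeneralPosition p →
    ∃ f : Fin n → Fin N, StrictMono f ∧ SuperOrderTypeHomogeneous (fun i => p (f i))}

/-- The tower function: `twr 1 x = x` and `twr (i+1) x = 2 ^ twr i x`. -/
def twr (k x : ℕ) : ℕ := (fun y => 2 ^ y)^[k - 1] x

/-- `t` is an `ε`-sample of the interval `[a, b]`: an increasing tuple of points of
`[a, b]` meeting every subinterval of `[a, b]` of length `ε`. -/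
def IsEpsSample (a b ε : ℝ) {n : ℕ} (t : Fin n → ℝ) : Prop :=
  StrictMono t ∧ (∀ i, t i ∈ Set.Icc a b) ∧
    ∀ x : ℝ, Set.Icc x (x + ε) ⊆ Set.Icc a b → ∃ i, t i ∈ Set.Icc x (x + ε)

/-- All `(k+1)`-element subsets of the index interval `[a, b]` have the same sign. -/
def IntervalHomog {n : ℕ} (k : ℕ) (sgn : Finset (Fin n) → Bool) (a b : Fin n) : Prop :=
  ∃ σ : Bool, ∀ s : Finset (Fin n), s.card = k + 1 → (∀ i ∈ s, a ≤ i ∧ i ≤ b) → sgn s = σ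

/-- `c 0 = 0 < c 1 < ⋯ < c m = n - 1` are the cut points of the greedy partition of the
`k`-sequence on `Fin n` with sign function `sgn` into the `m` blocks
`[c 0, c 1], [c 1, c 2], …, [c (m-1), c m]` (consecutive blocks overlap in one point):
each block has all its `(k+1)`-element subsets of the same sign, and each block is
maximal with this property (cannot be extended to the right). -/
def IsGreedyPartition {n : ℕ} (k : ℕ) (sgn : Finset (Fin n) → Bool) (m : ℕ)
    (c : Fin (m + 1) → Fin n) : Prop :=
  (c 0 : ℕ) = 0 ∧ (c (Fin.last m) : ℕ) = n - 1 ∧ StrictMono c ∧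
    (∀ j : Fin m, IntervalHomog k sgn (c j.castSucc) (c j.succ)) ∧
    (∀ j : Fin m, ∀ e : Fin n, c j.succ < e → ¬ IntervalHomog k sgn (c j.castSucc) e)

/-- A `k`-sequence is a flip `k`-sequence if for every `k`-element subset `A` of indices
the sign sequence `(sgn (insert i A) : i ∉ A)` (indices in increasing order) has at most
one sign change; for `±`-valued sequences this says there are no positions `i < j < l`
with `sgn (insert i A) ≠ sgn (insert j A)` and `sgn (insert j A) ≠ sgn (insert l A)`. -/
def FlipSeq {n : ℕ} (k : ℕ) (sgn : Finset (Fin n) → Bool) : Prop :=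
  ∀ A : Finset (Fin n), A.card = k →
    ¬ ∃ i j l : Fin n, i < j ∧ j < l ∧ i ∉ A ∧ j ∉ A ∧ l ∉ A ∧
      sgn (insert i A) ≠ sgn (insert j A) ∧ sgn (insert j A) ≠ sgn (insert l A)

theorem ramsey_aux (r s : ℕ) : ∃ N : ℕ, ∀ (J : Finset ℕ), N ≤ J.card → ∀ col : Finset ℕ → Bool,
    ∃ R ⊆ J, R.card = s ∧ ∃ b, ∀ S ⊆ R, S.card = r → col S = b := by
  induction r generalizing s with
  | zero =>
    refine ⟨s, fun J hJ col => ?_⟩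
    obtain ⟨R, hR, hc⟩ := Finset.exists_subset_card_eq hJ
    refine ⟨R, hR, hc, col ∅, fun S _ h => ?_⟩
    rw [Finset.card_eq_zero.mp h]
  | succ r ih =>
    have pre : ∀ L : ℕ, ∃ N : ℕ, ∀ (J : Finset ℕ), N ≤ J.card → ∀ col : Finset ℕ → Bool,
        ∃ R ⊆ J, R.card = L ∧ ∃ c : ℕ → Bool, ∀ S ⊆ R, S.card = r + 1 →
          ∃ x ∈ S, col S = c x := by
      intro L
      induction L with
      | zero =>
        refine ⟨0, fun J _ col => ⟨∅, by simp, by simp, fun _ => true, fun S hS h => ?_⟩⟩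
        rw [Finset.subset_empty.mp hS] at h
        simp at h
      | succ L ihL =>
        obtain ⟨N1, h1⟩ := ihL
        obtain ⟨N2, h2⟩ := ih N1
        refine ⟨N2 + 1, fun J hJ col => ?_⟩
        have hne : J.Nonempty := by
          rw [← Finset.card_pos]; omega
        obtain ⟨x, hx⟩ := hne
        obtain ⟨R1, hR1, hc1, b, hb⟩ := h2 (J.erase x) (by
          rw [Finset.card_erase_of_mem hx]; omega) (fun S => col (insert x S))
        obtain ⟨R2, hR2, hc2, c, hc⟩ := h1 R1 hc1.ge col
        have hxR2 : x ∉ R2 := fun h => by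
          have := hR1 (hR2 h)
          simp at this
        refine ⟨insert x R2, ?_, by rw [Finset.card_insert_of_notMem hxR2, hc2],
          fun y => if y = x then b else c y, ?_⟩
        · intro y hy
          rcases Finset.mem_insert.mp hy with rfl | h
          · exact hx
          · exact Finset.mem_of_mem_erase (hR1 (hR2 h))
        · intro S hS hcard
          by_cases hxS : x ∈ S
          · refine ⟨x, hxS, ?_⟩
            have := hb (S.erase x) (by
              intro y hy
              have h3 := Finset.mem_erase.mp hy
              rcases Finset.mem_insert.mp (hS h3.2) with h | h
              · exact absurd h h3.1
              · exact hR2 h) (by rw [Finset.card_erase_of_mem hxS]; omega)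
            rw [Finset.insert_erase hxS] at this
            simp [this]
          · have hsub : S ⊆ R2 := by
              intro y hy
              rcases Finset.mem_insert.mp (hS hy) with h | h
              · exact absurd (h ▸ hy) hxS
              · exact h
            obtain ⟨y, hy, hyc⟩ := hc S hsub hcard
            refine ⟨y, hy, ?_⟩
            have : y ≠ x := fun h => hxS (h ▸ hy)
            simp [this, hyc]
    obtain ⟨N, hN⟩ := pre (2 * s)
    refine ⟨N, fun J hJ col => ?_⟩
    obtain ⟨R, hR, hc, c, hcc⟩ := hN J hJ col
    have key : ∃ b, s ≤ (R.filter (fun x => c x = b)).card := by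
      by_contra hcon
      push Not at hcon
      have e1 := hcon true
      have e2 := hcon false
      have := Finset.card_filter_add_card_filter_not (s := R) (fun x => c x = true)
      simp only [Bool.not_eq_true] at this
      omega
    obtain ⟨b, hb⟩ := key
    obtain ⟨R', hR', hc'⟩ := Finset.exists_subset_card_eq hb
    refine ⟨R', fun y hy => hR (Finset.mem_filter.mp (hR' hy)).1, hc', b, fun S hS hcard => ?_⟩
    obtain ⟨x, hx, hxc⟩ := hcc S (fun y hy => (Finset.mem_filter.mp (hR' (hS hy))).1) hcard
    rw [hxc]
    exact (Finset.mem_filter.mp (hR' (hS hx))).2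

/-- determinant of a tuple -/
noncomputable def Dt (w : ℕ → ℕ → ℝ) (m : ℕ) (f : Fin m → ℕ) : ℝ :=
  Matrix.det (Matrix.of fun a b : Fin m => w (f b) a)

/-- determinant of a finset -/
noncomputable def DS (w : ℕ → ℕ → ℝ) (m : ℕ) (S : Finset ℕ) : ℝ :=
  if h : S.card = m then Dt w m (S.orderEmbOfFin h) else 0

theorem exists_enum (m : ℕ) (S : Finset ℕ) (h : S.card = m) :
    ∃ f : Fin m → ℕ, StrictMono f ∧ S = Finset.univ.image f := by
  refine ⟨S.orderEmbOfFin h, (S.orderEmbOfFin h).strictMono, ?_⟩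
  ext x
  have := Finset.range_orderEmbOfFin S h
  rw [← Finset.mem_coe, ← this]
  simp

theorem DS_image (w : ℕ → ℕ → ℝ) (m : ℕ) (f : Fin m → ℕ) (hf : StrictMono f) :
    DS w m (Finset.univ.image f) = Dt w m f := by
  have hc : (Finset.univ.image f).card = m := by
    rw [Finset.card_image_of_injective _ hf.injective]; simp
  rw [DS, dif_pos hc]
  congr 1
  exact (Finset.orderEmbOfFin_unique hc (fun x => Finset.mem_image_of_mem _ (Finset.mem_univ _)) hf).symm

theorem card_lt_enum (m : ℕ) (f : Fin m → ℕ) (hf : StrictMono f) (j : Fin m) :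
    ((Finset.univ.image f).filter (· < f j)).card = j := by
  have : (Finset.univ.image f).filter (· < f j) = (Finset.Iio j).image f := by
    ext x
    simp only [Finset.mem_filter, Finset.mem_image, Finset.mem_univ, true_and, Finset.mem_Iio]
    constructor
    · rintro ⟨⟨a, rfl⟩, h⟩
      exact ⟨a, hf.lt_iff_lt.mp h, rfl⟩
    · rintro ⟨a, h, rfl⟩
      exact ⟨⟨a, rfl⟩, hf h⟩
  rw [this, Finset.card_image_of_injective _ hf.injective, Fin.card_Iio]

theorem image_succAbove (m : ℕ) (f : Fin (m+1) → ℕ) (hf : StrictMono f) (j : Fin (m+1)) :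
    Finset.univ.image (f ∘ j.succAbove) = (Finset.univ.image f).erase (f j) := by
  ext x
  simp only [Finset.mem_erase, Finset.mem_image, Finset.mem_univ, true_and, Function.comp]
  constructor
  · rintro ⟨a, rfl⟩
    exact ⟨fun h => Fin.succAbove_ne j a (hf.injective h), _, rfl⟩
  · rintro ⟨h, a, rfl⟩
    obtain ⟨b, hb⟩ := Fin.exists_succAbove_eq (x := a) (y := j) (fun h' => h (by rw [h']))
    exact ⟨b, by rw [hb]⟩

/-- linear form vanishing on `A` -/
noncomputable def gco (w : ℕ → ℕ → ℝ) (k : ℕ) (f : Fin k → ℕ) (i : Fin (k+1)) : ℝ :=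
  (-1) ^ (i : ℕ) * Matrix.det (Matrix.of fun a b : Fin k => w (f b) (i.succAbove a))

theorem exists_form (w : ℕ → ℕ → ℝ) (k : ℕ) (A : Finset ℕ) (hA : A.card = k) :
    ∃ c : Fin (k+1) → ℝ,
      (∀ y ∉ A, DS w (k+1) (insert y A) =
        (-1) ^ (A.filter (· < y)).card * ∑ i, c i * w y i) ∧
      ∀ y ∈ A, ∑ i, c i * w y i = 0 := by
  obtain ⟨f, hf, rfl⟩ := exists_enum k A hA
  refine ⟨gco w k f, ?_, ?_⟩
  · intro y hy
    have hc : (insert y (Finset.univ.image f)).card = k + 1 := by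
      rw [Finset.card_insert_of_notMem hy, hA]
    obtain ⟨T, hT, hTe⟩ := exists_enum (k+1) _ hc
    have hyT : y ∈ Finset.univ.image T := by rw [← hTe]; simp
    obtain ⟨p, -, rfl⟩ := Finset.mem_image.mp hyT
    have hfT : T ∘ p.succAbove = f := by
      have h1 := image_succAbove k T hT p
      rw [← hTe, Finset.erase_insert hy] at h1
      have hs : StrictMono (T ∘ p.succAbove) := hT.comp (Fin.strictMono_succAbove p)
      have e1 := Finset.orderEmbOfFin_unique hA (f := f)
        (fun x => Finset.mem_image_of_mem _ (Finset.mem_univ _)) hf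
      have e2 := Finset.orderEmbOfFin_unique hA (f := T ∘ p.succAbove)
        (fun x => by rw [← h1]; exact Finset.mem_image_of_mem _ (Finset.mem_univ _)) hs
      rw [e1, e2]
    have hcard : ((Finset.univ.image f).filter (· < T p)).card = p := by
      rw [← card_lt_enum (k+1) T hT p, ← hTe, Finset.filter_insert]
      simp
    rw [hcard, hTe, DS_image w _ T hT, Dt, Matrix.det_succ_column _ p, Finset.mul_sum]
    refine Finset.sum_congr rfl fun i _ => ?_
    rw [gco, ← hfT, pow_add]
    simp only [Matrix.of_apply, Matrix.submatrix, Function.comp]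
    ring
  · intro y hy
    obtain ⟨j, -, rfl⟩ := Finset.mem_image.mp hy
    have h0 : Matrix.det (Matrix.of fun a b : Fin (k+1) => w ((Fin.cons (f j) f : Fin (k+1) → ℕ) b) a) = 0 := by
      apply Matrix.det_zero_of_column_eq (i := 0) (j := j.succ) (Fin.succ_ne_zero j).symm
      intro a; simp
    rw [Matrix.det_succ_column _ 0] at h0
    rw [← h0]
    refine Finset.sum_congr rfl fun i _ => ?_
    rw [gco]
    simp only [Matrix.of_apply, Matrix.submatrix, Fin.cons_zero, Fin.succAbove_zero, Fin.cons_succ,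
      Fin.val_zero, add_zero]
    ring

theorem form_relation (w : ℕ → ℕ → ℝ) (k : ℕ) (U : Finset ℕ) (hU : U.card = k + 3)
    (c : Fin (k+1) → ℝ) :
    ∑ u ∈ U, (-1) ^ (U.filter (· < u)).card * (∑ i, c i * w u i) * DS w (k+2) (U.erase u) = 0 := by
  obtain ⟨T, hT, rfl⟩ := exists_enum _ U hU
  rw [Finset.sum_image hT.injective.injOn]
  let M : Matrix (Fin (k+3)) (Fin (k+3)) ℝ := Matrix.of fun a b =>
    (Fin.cons (∑ i, c i * w (T b) i) (fun a' : Fin (k+2) => w (T b) a') : Fin (k+3) → ℝ) a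
  have hM : M.det = 0 := by
    rw [← Matrix.exists_vecMul_eq_zero_iff]
    refine ⟨Fin.cons 1 (Fin.snoc (fun i => - c i) 0), ?_, ?_⟩
    · intro h
      have := congrFun h 0
      simp at this
    · ext b
      simp [Matrix.vecMul, dotProduct, Fin.sum_univ_succ (n := k+2), Fin.sum_univ_castSucc (n := k+1), M]
  rw [Matrix.det_succ_row_zero] at hM
  rw [← hM]
  refine Finset.sum_congr rfl fun j _ => ?_
  rw [card_lt_enum _ T hT, ← image_succAbove _ T hT, DS_image _ _ _ (hT.comp (Fin.strictMono_succAbove j))]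
  simp [M, Dt, Matrix.submatrix]

/-- flip property -/
theorem flip_prop (w : ℕ → ℕ → ℝ) (k : ℕ) (A : Finset ℕ) (hA : A.card = k) (l x r : ℕ)
    (hlx : l < x) (hxr : x < r) (hl : l ∉ A) (hx : x ∉ A) (hr : r ∉ A) :
    DS w (k+1) (insert l A) * DS w (k+2) ((insert l (insert x (insert r A))).erase l)
    - DS w (k+1) (insert x A) * DS w (k+2) ((insert l (insert x (insert r A))).erase x)
    + DS w (k+1) (insert r A) * DS w (k+2) ((insert l (insert x (insert r A))).erase r) = 0 := by
  obtain ⟨c, h1, h2⟩ := exists_form w k A hA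
  have hxr' : x ∉ insert r A := by simp [hx, hxr.ne]
  have hlr' : l ∉ insert x (insert r A) := by simp [hl, hlx.ne, (hlx.trans hxr).ne]
  have hU : (insert l (insert x (insert r A))).card = k + 3 := by
    rw [Finset.card_insert_of_notMem hlr', Finset.card_insert_of_notMem hxr',
      Finset.card_insert_of_notMem hr, hA]
  have h3 := form_relation w k _ hU c
  have cl : ((insert l (insert x (insert r A))).filter (· < l)).card = (A.filter (· < l)).card := by
    simp [Finset.filter_insert, not_lt.mpr hlx.le, not_lt.mpr (hlx.trans hxr).le]
  have cx : ((insert l (insert x (insert r A))).filter (· < x)).card = (A.filter (· < x)).card + 1 := by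
    simp [Finset.filter_insert, not_lt.mpr hxr.le, hlx, hl]
  have cr : ((insert l (insert x (insert r A))).filter (· < r)).card = (A.filter (· < r)).card + 2 := by
    simp [Finset.filter_insert, hlx.trans hxr, hxr, hl, hx, hlx.ne]
  rw [Finset.sum_insert hlr', Finset.sum_insert hxr', Finset.sum_insert hr, cl, cx, cr,
    ← h1 l hl, pow_succ, pow_add] at h3
  rw [Finset.sum_eq_zero (s := A) (fun u hu => by rw [h2 u hu]; ring)] at h3
  rw [h1 x hx, h1 r hr]
  linear_combination h3

/-- all `m`-subsets of `J` have same sign `ε` -/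
def HomW (w : ℕ → ℕ → ℝ) (m : ℕ) (ε : ℝ) (J : Finset ℕ) : Prop :=
  ∀ S ⊆ J, S.card = m → 0 < ε * DS w m S

theorem flip_pos (w : ℕ → ℕ → ℝ) (k : ℕ) (J A : Finset ℕ) (hA : A.card = k) (l x r : ℕ)
    (hlx : l < x) (hxr : x < r) (hl : l ∉ A) (hx : x ∉ A) (hr : r ∉ A)
    (hAJ : A ⊆ J) (hlJ : l ∈ J) (hxJ : x ∈ J) (hrJ : r ∈ J) (τ : ℝ) (hJ : HomW w (k+2) τ J)
    (ε : ℝ) (h1 : 0 < ε * DS w (k+1) (insert l A)) (h2 : 0 < ε * DS w (k+1) (insert r A)) :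
    0 < ε * DS w (k+1) (insert x A) := by
  have h := flip_prop w k A hA l x r hlx hxr hl hx hr
  have hxr' : x ∉ insert r A := by simp [hx, hxr.ne]
  have hlr' : l ∉ insert x (insert r A) := by simp [hl, hlx.ne, (hlx.trans hxr).ne]
  have hU : (insert l (insert x (insert r A))).card = k + 3 := by
    rw [Finset.card_insert_of_notMem hlr', Finset.card_insert_of_notMem hxr',
      Finset.card_insert_of_notMem hr, hA]
  have hUJ : insert l (insert x (insert r A)) ⊆ J := by
    simp [Finset.insert_subset_iff, *]
  have hW : ∀ u ∈ insert l (insert x (insert r A)),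
      0 < τ * DS w (k+2) ((insert l (insert x (insert r A))).erase u) := by
    intro u hu
    exact hJ _ ((Finset.erase_subset _ _).trans hUJ) (by rw [Finset.card_erase_of_mem hu, hU]; rfl)
  have wl := hW l (by simp)
  have wx := hW x (by simp)
  have wr := hW r (by simp)
  have p1 := mul_pos h1 wl
  have p2 := mul_pos h2 wr
  refine pos_of_mul_pos_left (b := τ * DS w (k+2) ((insert l (insert x (insert r A))).erase x)) ?_ wx.le
  nlinarith [congrArg (fun z => ε * τ * z) h]

theorem fill_gap (w : ℕ → ℕ → ℝ) (k : ℕ) (J L G R : Finset ℕ) (τ ε : ℝ)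
    (hJ : HomW w (k+2) τ J) (hL : L ⊆ J) (hG : G ⊆ J) (hR : R ⊆ J)
    (hLc : k + 1 ≤ L.card) (hRc : k + 1 ≤ R.card) (hLG : ∀ x ∈ L, ∀ y ∈ G, x < y)
    (hGR : ∀ x ∈ G, ∀ y ∈ R, x < y) (hh : HomW w (k+1) ε (L ∪ R)) :
    HomW w (k+1) ε (L ∪ R ∪ G) := by
  have key : ∀ t : ℕ, ∀ S ⊆ L ∪ R ∪ G, S.card = k + 1 → (S ∩ G).card = t →
      0 < ε * DS w (k+1) S := by
    intro t
    induction t with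
    | zero =>
      intro S hS hc h0
      refine hh S (fun y hy => ?_) hc
      rcases Finset.mem_union.mp (hS hy) with h | h
      · exact h
      · have : y ∈ S ∩ G := Finset.mem_inter.mpr ⟨hy, h⟩
        rw [Finset.card_eq_zero.mp h0] at this
        simp at this
    | succ t ih =>
      intro S hS hc ht
      have hne : (S ∩ G).Nonempty := by rw [← Finset.card_pos]; omega
      obtain ⟨x, hx⟩ := hne
      obtain ⟨hxS, hxG⟩ := Finset.mem_inter.mp hx
      have hA : (S.erase x).card = k := by rw [Finset.card_erase_of_mem hxS, hc]; rfl
      obtain ⟨l, hlL, hlA⟩ := Finset.exists_mem_notMem_of_card_lt_card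
        (s := S.erase x) (t := L) (by omega)
      obtain ⟨r, hrR, hrA⟩ := Finset.exists_mem_notMem_of_card_lt_card
        (s := S.erase x) (t := R) (by omega)
      have hlx := hLG l hlL x hxG
      have hxr := hGR x hxG r hrR
      have hlG : l ∉ G := fun h => lt_irrefl _ (hLG l hlL l h)
      have hrG : r ∉ G := fun h => lt_irrefl _ (hGR r h r hrR)
      have hSJ : S ⊆ J := hS.trans (Finset.union_subset (Finset.union_subset hL hR) hG)
      have sub : ∀ y ∈ L ∪ R, y ∉ G → y ∉ S.erase x → 0 < ε * DS w (k+1) (insert y (S.erase x)) := by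
        intro y hy hyG hyA
        apply ih
        · intro z hz
          rcases Finset.mem_insert.mp hz with rfl | h
          · exact Finset.mem_union_left _ hy
          · exact hS (Finset.mem_of_mem_erase h)
        · rw [Finset.card_insert_of_notMem hyA, hA]
        · rw [Finset.insert_inter_of_notMem hyG, Finset.erase_inter, Finset.card_erase_of_mem hx, ht]
          rfl
      have := flip_pos w k J (S.erase x) hA l x r hlx hxr hlA (Finset.notMem_erase x S) hrA
        ((Finset.erase_subset _ _).trans hSJ) (hL hlL) (hG hxG) (hR hrR) τ hJ ε
        (sub l (Finset.mem_union_left _ hlL) hlG hlA) (sub r (Finset.mem_union_right _ hrR) hrG hrA)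
      rwa [Finset.insert_erase hxS] at this
  intro S hS hc
  exact key _ S hS hc rfl

theorem split_finset (a b : ℕ) (R : Finset ℕ) (h : R.card = a + b) :
    ∃ L ⊆ R, ∃ Q ⊆ R, L.card = a ∧ Q.card = b ∧ ∀ x ∈ L, ∀ y ∈ Q, x < y := by
  induction a generalizing R with
  | zero => exact ⟨∅, by simp, R, subset_rfl, by simp, by omega, by simp⟩
  | succ a ih =>
    have hne : R.Nonempty := by rw [← Finset.card_pos]; omega
    have hm := R.min'_mem hne
    obtain ⟨L, hL, Q, hQ, hLc, hQc, hlt⟩ := ih (R.erase (R.min' hne)) (by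
      rw [Finset.card_erase_of_mem hm]; omega)
    have hml : R.min' hne ∉ L := fun h => Finset.notMem_erase _ _ (hL h)
    refine ⟨insert (R.min' hne) L, ?_, Q, hQ.trans (Finset.erase_subset _ _), ?_, hQc, ?_⟩
    · exact Finset.insert_subset hm (hL.trans (Finset.erase_subset _ _))
    · rw [Finset.card_insert_of_notMem hml, hLc]
    · intro x hx y hy
      rcases Finset.mem_insert.mp hx with rfl | h
      · have := hQ hy
        exact Finset.min'_lt_of_mem_erase_min' _ _ this
      · exact hlt x h y hy

theorem ramsey_sign (r s : ℕ) : ∃ N : ℕ, ∀ (J : Finset ℕ), N ≤ J.card → ∀ w : ℕ → ℕ → ℝ,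
    (∀ S ⊆ J, S.card = r → DS w r S ≠ 0) →
    ∃ R ⊆ J, R.card = s ∧ ∃ ε : ℝ, (ε = 1 ∨ ε = -1) ∧ HomW w r ε R := by
  classical
  obtain ⟨N, hN⟩ := ramsey_aux r s
  refine ⟨N, fun J hJ w hw => ?_⟩
  obtain ⟨R, hR, hc, b, hb⟩ := hN J hJ (fun S => decide (0 < DS w r S))
  refine ⟨R, hR, hc, ?_⟩
  cases b with
  | true =>
    refine ⟨1, Or.inl rfl, fun S hS hcS => ?_⟩
    simpa using hb S hS hcS
  | false =>
    refine ⟨-1, Or.inr rfl, fun S hS hcS => ?_⟩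
    have h1 := hb S hS hcS
    have h2 := hw S (hS.trans hR) hcS
    simp only [decide_eq_false_iff_not, not_lt] at h1
    have := lt_of_le_of_ne h1 h2
    linarith

theorem one_step (k : ℕ) : ∃ C : ℕ, 0 < C ∧ ∀ (w : ℕ → ℕ → ℝ) (a b t : ℕ) (τ : ℝ), 0 < t →
    C * t ≤ b - a → (∀ S ⊆ Finset.Ico a b, S.card = k + 1 → DS w (k+1) S ≠ 0) →
    HomW w (k+2) τ (Finset.Ico a b) →
    ∃ a', a ≤ a' ∧ a' + t ≤ b ∧
      ∃ ε : ℝ, (ε = 1 ∨ ε = -1) ∧ HomW w (k+1) ε (Finset.Ico a' (a' + t)) := by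
  obtain ⟨N, hN⟩ := ramsey_sign (k+1) ((k+1) + (k+1))
  refine ⟨2 * N + 1, by omega, fun w a b t τ ht hC hw hJ => ?_⟩
  have hbd : ∀ i < N, a + i * (t + 1) < b := by
    intro i hi
    have : (i + 1) * (t + 1) ≤ N * (t + 1) := Nat.mul_le_mul_right _ hi
    nlinarith [Nat.mul_le_mul_left N ht,
      (by
        have h1 : 0 < (2 * N + 1) * t := by positivity
        omega : a + (2 * N + 1) * t ≤ b)]
  have hreps : (Finset.range N).image (fun i => a + i * (t + 1)) ⊆ Finset.Ico a b := by
    intro y hy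
    obtain ⟨i, hi, rfl⟩ := Finset.mem_image.mp hy
    have := hbd i (Finset.mem_range.mp hi)
    simp [this]
  have hinj : Function.Injective (fun i => a + i * (t + 1)) := by
    intro i j h
    have h : a + i * (t + 1) = a + j * (t + 1) := h
    have h' : i * (t + 1) = j * (t + 1) := by omega
    exact Nat.eq_of_mul_eq_mul_right (Nat.succ_pos t) h'
  obtain ⟨R, hR, hRc, ε, hε, hh⟩ := hN _ (by
    rw [Finset.card_image_of_injective _ hinj, Finset.card_range]) w
    (fun S hS hc => hw S (hS.trans hreps) hc)
  obtain ⟨L, hL, Q, hQ, hLc, hQc, hlt⟩ := split_finset _ _ R hRc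
  have hLne : L.Nonempty := by rw [← Finset.card_pos]; omega
  have hQne : Q.Nonempty := by rw [← Finset.card_pos]; omega
  obtain ⟨x, hx, hxmax⟩ : ∃ x ∈ L, ∀ y ∈ L, y ≤ x := ⟨L.max' hLne, L.max'_mem _, fun y hy => L.le_max' y hy⟩
  have gap : ∀ y ∈ Q, x + 1 + t ≤ y := by
    intro y hy
    have hxy := hlt x hx y hy
    obtain ⟨i, -, rfl⟩ := Finset.mem_image.mp (hR (hL hx))
    obtain ⟨j, -, rfl⟩ := Finset.mem_image.mp (hR (hQ hy))
    have hxy : a + i * (t+1) < a + j * (t+1) := hxy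
    have hij : i < j := Nat.lt_of_mul_lt_mul_right (a := t + 1) (by omega)
    have : (i + 1) * (t + 1) ≤ j * (t + 1) := Nat.mul_le_mul_right _ hij
    show a + i * (t + 1) + 1 + t ≤ a + j * (t + 1)
    linarith [add_mul i 1 (t+1)]
  obtain ⟨y, hy⟩ := hQne
  have hyb := Finset.mem_Ico.mp (hreps (hR (hQ hy)))
  have hxb := Finset.mem_Ico.mp (hreps (hR (hL hx)))
  have hg := gap y hy
  refine ⟨x + 1, by omega, by omega, ε, hε, ?_⟩
  have := fill_gap w k (Finset.Ico a b) L (Finset.Ico (x+1) (x+1+t)) Q τ ε hJ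
    (hL.trans (hR.trans hreps)) (Finset.Ico_subset_Ico (by omega) (by omega))
    (hQ.trans (hR.trans hreps)) hLc.ge hQc.ge
    (fun u hu v hv => by
      have := hxmax u hu
      have := (Finset.mem_Ico.mp hv).1
      omega)
    (fun u hu v hv => by
      have := gap v hv
      have := (Finset.mem_Ico.mp hu).2
      omega)
    (fun S hS hc => hh S (hS.trans (Finset.union_subset hL hQ)) hc)
  exact fun S hS hc => this S (hS.trans Finset.subset_union_right) hc

theorem all_steps (e : ℕ) : ∀ j : ℕ, ∃ C : ℕ, 0 < C ∧ ∀ (w : ℕ → ℕ → ℝ) (a b t : ℕ) (τ : ℝ), 0 < t →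
    C * t ≤ b - a → (τ = 1 ∨ τ = -1) →
    (∀ m, 1 ≤ m → m ≤ e + j → ∀ S ⊆ Finset.Ico a b, S.card = m → DS w m S ≠ 0) →
    HomW w (e + j + 1) τ (Finset.Ico a b) →
    ∃ a', a ≤ a' ∧ a' + t ≤ b ∧ ∀ m, e + 1 ≤ m → m ≤ e + j + 1 →
      ∃ ε : ℝ, (ε = 1 ∨ ε = -1) ∧ HomW w m ε (Finset.Ico a' (a' + t)) := by
  intro j
  induction j with
  | zero =>
    refine ⟨1, one_pos, fun w a b t τ ht hC hτ _ hJ => ⟨a, le_rfl, by omega, fun m h1 h2 => ⟨τ, hτ, ?_⟩⟩⟩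
    obtain rfl : m = e + 0 + 1 := by omega
    exact fun S hS hc => hJ S (hS.trans (Finset.Ico_subset_Ico le_rfl (by omega))) hc
  | succ j ih =>
    obtain ⟨C1, hC1, h1⟩ := ih
    obtain ⟨C2, hC2, h2⟩ := one_step (e + j)
    refine ⟨C2 * C1, by positivity, fun w a b t τ ht hC hτ hw hJ => ?_⟩
    obtain ⟨a1, ha1, hb1, ε1, hε1, hh1⟩ := h2 w a b (C1 * t) τ (by positivity)
      (by rw [← mul_assoc]; exact hC) (fun S hS hc => hw _ (by omega) (by omega) S hS hc) hJ
    have hsub : Finset.Ico a1 (a1 + C1 * t) ⊆ Finset.Ico a b := Finset.Ico_subset_Ico ha1 hb1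
    obtain ⟨a2, ha2, hb2, hh2⟩ := h1 w a1 (a1 + C1 * t) t ε1 ht (by omega) hε1
      (fun m hm1 hm2 S hS hc => hw m hm1 (by omega) S (hS.trans hsub) hc) hh1
    refine ⟨a2, by omega, by omega, fun m hm1 hm2 => ?_⟩
    rcases Nat.lt_or_ge m (e + (j + 1) + 1) with h | h
    · exact hh2 m hm1 (by omega)
    · obtain rfl : m = e + (j + 1) + 1 := by omega
      exact ⟨τ, hτ, fun S hS hc => hJ S (hS.trans (Finset.Ico_subset_Ico (by omega) (by omega))) hc⟩

/-- homogeneous coordinates, extended by zero -/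
noncomputable def Wc {d n : ℕ} (q : Fin n → Fin d → ℝ) (i j : ℕ) : ℝ :=
  if j = 0 then 1 else if h : i < n ∧ j - 1 < d then q ⟨i, h.1⟩ ⟨j - 1, h.2⟩ else 0

theorem mat_Wc {d n k : ℕ} (hk : k ≤ d) (q : Fin n → Fin d → ℝ) (f : Fin (k+1) → Fin n) :
    (Matrix.of fun i j : Fin (k + 1) =>
      (Fin.cons (1 : ℝ) (fun a : Fin k => q (f j) (Fin.castLE hk a)) : Fin (k + 1) → ℝ) i)
    = Matrix.of fun a b : Fin (k+1) => Wc q (f b) a := by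
  ext i j
  refine Fin.cases ?_ (fun i => ?_) i
  · simp [Wc]
  · have : (i : ℕ) < d := by omega
    simp [Wc, this]
    rfl

theorem otSign_Wc {d n k : ℕ} (hk : k ≤ d) (q : Fin n → Fin d → ℝ) (f : Fin (k+1) → Fin n) :
    otSign (fun j => fun a : Fin k => q (f j) (Fin.castLE hk a)) =
      Real.sign (Dt (Wc q) (k+1) (fun j => (f j : ℕ))) := by
  rw [otSign, mat_Wc, Dt]

theorem sign_eq_of_pos {ε x : ℝ} (hε : ε = 1 ∨ ε = -1) (h : 0 < ε * x) : Real.sign x = ε := by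
  rcases hε with rfl | rfl
  · exact Real.sign_of_pos (by linarith)
  · exact Real.sign_of_neg (by linarith)

theorem pos_of_sign_eq {ε x : ℝ} (hε : ε ≠ 0) (h : Real.sign x = ε) :
    (ε = 1 ∨ ε = -1) ∧ 0 < ε * x := by
  rcases lt_trichotomy x 0 with hx | hx | hx
  · rw [Real.sign_of_neg hx] at h; subst h; exact ⟨Or.inr rfl, by linarith⟩
  · subst hx; rw [Real.sign_zero] at h; exact absurd h.symm hε
  · rw [Real.sign_of_pos hx] at h; subst h; exact ⟨Or.inl rfl, by linarith⟩

theorem gp_det {d n k : ℕ} (hk : k ≤ d) (q : Fin n → Fin d → ℝ)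
    (hq : GeneralPosition (fun i => fun j : Fin k => q i (Fin.castLE hk j)))
    (f : Fin (k+1) → Fin n) (hf : Function.Injective f) :
    Dt (Wc q) (k+1) (fun j => (f j : ℕ)) ≠ 0 := by
  intro h0
  rw [Dt, ← mat_Wc hk, ← Matrix.exists_mulVec_eq_zero_iff] at h0
  obtain ⟨v, hv, hv0⟩ := h0
  have hai := hq (Finset.univ.image f) (by
    rw [Finset.card_image_of_injective _ hf]; simp)
  let e : Fin (k+1) ↪ (Finset.univ.image f : Finset (Fin n)) :=
    ⟨fun i => ⟨f i, Finset.mem_image_of_mem _ (Finset.mem_univ _)⟩, fun i j h => hf (by simpa using h)⟩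
  have hai2 := hai.comp_embedding e
  rw [affineIndependent_iff] at hai2
  apply hv
  ext i
  refine hai2 Finset.univ v ?_ ?_ i (Finset.mem_univ _)
  · have := congrFun hv0 0
    simpa [Matrix.mulVec, dotProduct] using this
  · ext a
    have := congrFun hv0 a.succ
    simp only [Matrix.mulVec, dotProduct, Matrix.of_apply, Fin.cons_succ, Pi.zero_apply] at this
    simp only [Finset.sum_apply, Pi.smul_apply, Pi.zero_apply, smul_eq_mul, Function.comp]
    rw [← this]
    exact Finset.sum_congr rfl fun i _ => mul_comm _ _

theorem gp_DS {d n k : ℕ} (hk : k ≤ d) (q : Fin n → Fin d → ℝ)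
    (hq : GeneralPosition (fun i => fun j : Fin k => q i (Fin.castLE hk j)))
    (S : Finset ℕ) (hS : ∀ x ∈ S, x < n) (hc : S.card = k + 1) : DS (Wc q) (k+1) S ≠ 0 := by
  obtain ⟨f, hf, rfl⟩ := exists_enum _ S hc
  rw [DS_image _ _ _ hf]
  exact gp_det hk q hq (fun j => ⟨f j, hS _ (Finset.mem_image_of_mem _ (Finset.mem_univ _))⟩)
    (fun i j h => hf.injective (by simpa using h))

theorem OT_nonempty (d n : ℕ) : {N : ℕ | ∀ p : Fin N → (Fin d → ℝ), GeneralPosition p →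
    ∃ f : Fin n → Fin N, StrictMono f ∧ OrderTypeHomogeneous (fun i => p (f i))}.Nonempty := by
  obtain ⟨N, hN⟩ := ramsey_sign (d+1) n
  refine ⟨N, fun p hp => ?_⟩
  obtain ⟨R, hR, hRc, ε, hε, hh⟩ := hN (Finset.range N) (by simp) (Wc p)
    (fun S hS hc => gp_DS le_rfl p hp S (fun x hx => Finset.mem_range.mp (hS hx)) hc)
  obtain ⟨f, hf, rfl⟩ := exists_enum _ R hRc
  have hfN : ∀ i, f i < N := fun i =>
    Finset.mem_range.mp (hR (Finset.mem_image_of_mem _ (Finset.mem_univ _)))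
  refine ⟨fun i => ⟨f i, hfN i⟩, fun i j h => hf h, ε, by rcases hε with rfl | rfl <;> norm_num, ?_⟩
  intro g hg
  have h1 := otSign_Wc le_rfl p (fun j => (⟨f (g j), hfN _⟩ : Fin N))
  refine h1.trans (sign_eq_of_pos hε ?_)
  have hs : StrictMono (fun j => f (g j)) := hf.comp hg
  have h2 := hh (Finset.univ.image (fun j => f (g j))) (by
    intro x hx
    obtain ⟨j, -, rfl⟩ := Finset.mem_image.mp hx
    exact Finset.mem_image_of_mem _ (Finset.mem_univ _)) (by
    rw [Finset.card_image_of_injective _ hs.injective]; simp)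
  rwa [DS_image _ _ _ hs] at h2

theorem gp_comp {d n N : ℕ} (p : Fin N → (Fin d → ℝ)) (hp : GeneralPosition p) (f : Fin n → Fin N)
    (hf : Function.Injective f) : GeneralPosition (fun i => p (f i)) := by
  intro s hs
  have h1 := hp (s.image f) (by rwa [Finset.card_image_of_injective _ hf])
  let e : s ↪ (s.image f : Finset (Fin N)) :=
    ⟨fun i => ⟨f i, Finset.mem_image_of_mem _ i.2⟩, fun i j h => Subtype.ext (hf (by simpa using h))⟩
  exact h1.comp_embedding e

theorem hom_sub (d : ℕ) : ∃ C : ℕ, 0 < C ∧ ∀ (n t : ℕ) (q : Fin n → Fin d → ℝ), 0 < t → C * t ≤ n →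
    SuperGeneralPosition q → OrderTypeHomogeneous q →
    ∃ g : Fin t → Fin n, StrictMono g ∧ SuperOrderTypeHomogeneous (fun i => q (g i)) := by
  rcases Nat.eq_zero_or_pos d with rfl | hd
  · refine ⟨1, one_pos, fun n t q ht hC _ _ => ⟨Fin.castLE (by omega), fun i j h => h, ?_⟩⟩
    intro k h1 h2
    omega
  obtain ⟨C, hC, hmain⟩ := all_steps 1 (d - 1)
  refine ⟨C, hC, fun n t q ht hCt hq hom => ?_⟩
  obtain ⟨σ, hσ, hom⟩ := hom
  have hb : ∀ S ⊆ Finset.Ico 0 n, S.card = d + 1 → Real.sign (DS (Wc q) (d+1) S) = σ := by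
    intro S hS hc
    obtain ⟨f, hf, rfl⟩ := exists_enum _ S hc
    have hfn : ∀ i, f i < n := fun i =>
      (Finset.mem_Ico.mp (hS (Finset.mem_image_of_mem _ (Finset.mem_univ _)))).2
    rw [DS_image _ _ _ hf]
    have h1 := hom (fun j => ⟨f j, hfn j⟩) (fun i j h => hf h)
    rw [← h1]
    exact (otSign_Wc le_rfl q (fun j => (⟨f j, hfn j⟩ : Fin n))).symm
  have hτ : ∃ τ : ℝ, (τ = 1 ∨ τ = -1) ∧ HomW (Wc q) (d+1) τ (Finset.Ico 0 n) := by
    by_cases hnd : ∃ S ⊆ Finset.Ico 0 n, S.card = d + 1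
    · obtain ⟨S, hS, hc⟩ := hnd
      refine ⟨σ, (pos_of_sign_eq hσ (hb S hS hc)).1, fun S hS hc => ?_⟩
      exact (pos_of_sign_eq hσ (hb S hS hc)).2
    · exact ⟨1, Or.inl rfl, fun S hS hc => absurd ⟨S, hS, hc⟩ hnd⟩
  obtain ⟨τ, hτ, hh⟩ := hτ
  have hd1 : 1 + (d - 1) + 1 = d + 1 := by omega
  obtain ⟨a, -, hat, hfin⟩ := hmain (Wc q) 0 n t τ ht (by omega) hτ (by
    intro m hm1 hm2 S hS hc
    obtain ⟨k, rfl⟩ : ∃ k, m = k + 1 := ⟨m - 1, by omega⟩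
    rcases Nat.eq_zero_or_pos k with rfl | hk
    · obtain ⟨f, hf, rfl⟩ := exists_enum _ S hc
      rw [DS_image _ _ _ hf]
      simp [Dt, Wc]
    · exact gp_DS (by omega) q (hq k hk (by omega)) S (fun x hx => (Finset.mem_Ico.mp (hS hx)).2) hc)
    (by rw [hd1]; exact hh)
  have hlt : ∀ i : Fin t, a + i < n := fun i => by omega
  refine ⟨fun i => ⟨a + i, hlt i⟩, fun i j h => by
    simp only [Fin.lt_def] at h ⊢; omega, ?_⟩
  intro k hk1 hk
  obtain ⟨ε, hε, hhε⟩ := hfin (k+1) (by omega) (by omega)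
  refine ⟨ε, by rcases hε with rfl | rfl <;> norm_num, fun f hf => ?_⟩
  refine (otSign_Wc hk q (fun j => (⟨a + f j, hlt _⟩ : Fin n))).trans (sign_eq_of_pos hε ?_)
  have hs : StrictMono (fun j => a + (f j : ℕ)) := fun i j h => by
    have := hf h
    simp only [Fin.lt_def] at this ⊢; omega
  have h2 := hhε (Finset.univ.image (fun j => a + (f j : ℕ))) (by
    intro x hx
    obtain ⟨j, -, rfl⟩ := Finset.mem_image.mp hx
    simp) (by
    rw [Finset.card_image_of_injective _ hs.injective]; simp)
  rwa [DS_image _ _ _ hs] at h2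

/-- For every `d ≥ 2` there is a constant `c > 0` with
`OT_d(n) ≥ COT_d(⌈c·n⌉)` for all `n`. -/
theorem OT_ge_COT :
    ∀ d : ℕ, 2 ≤ d → ∃ c : ℝ, 0 < c ∧ ∀ n : ℕ, COTNum d ⌈c * (n : ℝ)⌉₊ ≤ OTNum d n := by
  intro d _
  obtain ⟨C, hC, hmain⟩ := hom_sub d
  have hCr : (0 : ℝ) < C := by exact_mod_cast hC
  refine ⟨1 / (2 * C), by positivity, fun n => ?_⟩
  apply Nat.sInf_le
  intro p hp
  have hN : OTNum d n ∈ {N : ℕ | ∀ p : Fin N → (Fin d → ℝ), GeneralPosition p →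
    ∃ f : Fin n → Fin N, StrictMono f ∧ OrderTypeHomogeneous (fun i => p (f i))} :=
    Nat.sInf_mem (OT_nonempty d n)
  obtain ⟨f, hf, hom⟩ := hN p (hp d (by omega) le_rfl)
  generalize ht : ⌈1 / (2 * (C : ℝ)) * (n : ℝ)⌉₊ = t
  rcases Nat.lt_or_ge 1 t with h1 | h1
  · have h2 : (t : ℝ) < 1 / (2 * (C : ℝ)) * (n : ℝ) + 1 := by
      rw [← ht]; exact Nat.ceil_lt_add_one (by positivity)
    have h3 : (2 : ℝ) ≤ t := by exact_mod_cast h1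
    have h4 : (2 * C : ℝ) * t < n + 2 * C := by
      have := mul_lt_mul_of_pos_left h2 (by positivity : (0:ℝ) < 2 * C)
      have e : (2 * C : ℝ) * (1 / (2 * (C : ℝ)) * (n : ℝ) + 1) = n + 2 * C := by field_simp
      linarith
    have h5 : C * t ≤ n := by
      have : (C * t : ℝ) ≤ n := by nlinarith
      exact_mod_cast this
    obtain ⟨g, hg, hsup⟩ := hmain n t (fun i => p (f i)) (by omega) h5
      (fun k hk1 hk => gp_comp _ (hp k hk1 hk) f hf.injective) hom
    exact ⟨fun i => f (g i), hf.comp hg, hsup⟩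
  · have htn : t ≤ n := by
      rcases Nat.eq_zero_or_pos n with rfl | hn
      · simp at ht; omega
      · omega
    refine ⟨fun i => f (Fin.castLE htn i), fun i j h => hf h, ?_⟩
    intro k hk1 hk
    refine ⟨1, one_ne_zero, fun g hg => ?_⟩
    have := hg (show (0 : Fin (k+1)) < Fin.last k by
      rw [Fin.lt_def]; simp; omega)
    have h8 := (g 0).2
    have h9 := (g (Fin.last k)).2
    simp only [Fin.lt_def] at this
    omega
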